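/- Asymptotic RVQ gain for the MISO channel: Fix a real B̄ ≥ 0. Then 2^{B̄·N_t}·Beta(2^{B̄·N_t}, N_t/(N_t − 1)) → 2^{−B̄} as the integer N_t → ∞; equivalently, the mean E[ν] = 1 − 2^{B̄·N_t}·Beta(2^{B̄·N_t}, N_t/(N_t−1)) converges to 1 − 2^{−B̄}. -/

import Mathlib

/-- The Euler Beta function `Beta(x,y) = ∫₀¹ t^{x-1} (1-t)^{y-1} dt`. -/
noncomputable def Beta (x y : ℝ) : ℝ := ∫ t in (0:ℝ)..1, t ^ (x - 1) * (1 - t) ^ (y - 1)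

theorem Beta_eq_Gamma (x y : ℝ) (hx : 0 < x) (hy : 0 < y) :
    Beta x y = Real.Gamma x * Real.Gamma y / Real.Gamma (x + y) := by
  have h := ProbabilityTheory.beta_eq_betaIntegralReal x y hx hy
  have h2 : Complex.betaIntegral x y = ((Beta x y : ℝ) : ℂ) := by
    unfold Complex.betaIntegral Beta
    rw [← intervalIntegral.integral_ofReal]
    refine intervalIntegral.integral_congr fun t ht => ?_
    rw [Set.uIcc_of_le zero_le_one] at ht
    have h1 : 0 ≤ 1 - t := by linarith [ht.2]
    rw [Complex.ofReal_mul, Complex.ofReal_cpow ht.1, Complex.ofReal_cpow h1]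
    push_cast
    rfl
  rw [h2, Complex.ofReal_re] at h
  rw [← h, ProbabilityTheory.beta]

theorem Gamma_add_le_aux (z s : ℝ) (hz : 0 < z) (hs : 0 < s) (hs1 : s < 1) :
    Real.Gamma (z + s) ≤ Real.Gamma z * z ^ s := by
  have h := Real.Gamma_mul_add_mul_le_rpow_Gamma_mul_rpow_Gamma hz (by linarith : 0 < z + 1)
    (by linarith : 0 < 1 - s) hs (by ring)
  have hG := Real.Gamma_pos_of_pos hz
  rw [Real.Gamma_add_one hz.ne', Real.mul_rpow hz.le hG.le] at h
  have e : (1 - s) * z + s * (z + 1) = z + s := by ring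
  rw [e] at h
  refine h.trans (le_of_eq ?_)
  have : Real.Gamma z ^ (1 - s) * Real.Gamma z ^ s = Real.Gamma z := by
    rw [← Real.rpow_add hG]; simp
  calc _ = (Real.Gamma z ^ (1 - s) * Real.Gamma z ^ s) * z ^ s := by ring
    _ = _ := by rw [this]

theorem Beta_bounds (x s : ℝ) (hx : 1 ≤ x) (hs : 0 < s) (hs1 : s < 1) :
    Real.Gamma (1 + s) * (2 ^ (-s) * x ^ (-s)) ≤ x * Beta x (1 + s) ∧
    x * Beta x (1 + s) ≤ Real.Gamma (1 + s) * ((1 + s) * x ^ (-s)) := by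
  have hx0 : 0 < x := by linarith
  have hz : 0 < x + 1 := by linarith
  have hzs : 0 < x + 1 + s := by linarith
  have hA := Real.Gamma_pos_of_pos hz
  have hC := Real.Gamma_pos_of_pos hzs
  have hS := Real.Gamma_pos_of_pos (by linarith : 0 < 1 + s)
  have e : x * Beta x (1 + s) =
      Real.Gamma (1 + s) * (Real.Gamma (x + 1) / Real.Gamma (x + 1 + s)) := by
    rw [Beta_eq_Gamma x (1 + s) hx0 (by linarith), Real.Gamma_add_one hx0.ne', add_assoc]
    ring
  rw [e]
  have hxs : 0 < x ^ s := Real.rpow_pos_of_pos hx0 s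
  constructor
  · refine mul_le_mul_of_nonneg_left ?_ hS.le
    rw [← Real.mul_rpow (by norm_num) hx0.le, Real.rpow_neg (by positivity), le_div_iff₀ hC,
      inv_mul_le_iff₀ (by positivity), mul_comm]
    refine (Gamma_add_le_aux _ s hz hs hs1).trans ?_
    refine mul_le_mul_of_nonneg_left ?_ hA.le
    exact Real.rpow_le_rpow hz.le (by linarith) hs.le
  · refine mul_le_mul_of_nonneg_left ?_ hS.le
    have h := Gamma_add_le_aux (x + 1 + s) (1 - s) hzs (by linarith) (by linarith)
    have e2 : x + 1 + s + (1 - s) = x + 1 + 1 := by ring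
    rw [e2, Real.Gamma_add_one hz.ne', Real.rpow_sub hzs, Real.rpow_one, ← mul_div_assoc,
      le_div_iff₀ (Real.rpow_pos_of_pos hzs s)] at h
    have h3 : x ^ s ≤ (x + 1 + s) ^ s := Real.rpow_le_rpow hx0.le (by linarith) hs.le
    rw [Real.rpow_neg hx0.le, div_le_iff₀ hC]
    have h4 : (x + 1) * (Real.Gamma (x + 1) * x ^ s) ≤
        (x + 1) * ((1 + s) * Real.Gamma (x + 1 + s)) := by
      calc _ = (x + 1) * Real.Gamma (x + 1) * x ^ s := by ring
        _ ≤ (x + 1) * Real.Gamma (x + 1) * (x + 1 + s) ^ s :=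
          mul_le_mul_of_nonneg_left h3 (by positivity)
        _ ≤ Real.Gamma (x + 1 + s) * (x + 1 + s) := h
        _ ≤ Real.Gamma (x + 1 + s) * ((x + 1) * (1 + s)) :=
          mul_le_mul_of_nonneg_left (by nlinarith) hC.le
        _ = _ := by ring
    have h5 := le_of_mul_le_mul_left h4 hz
    calc Real.Gamma (x + 1) = (Real.Gamma (x + 1) * x ^ s) * (x ^ s)⁻¹ := by field_simp
      _ ≤ ((1 + s) * Real.Gamma (x + 1 + s)) * (x ^ s)⁻¹ :=
        mul_le_mul_of_nonneg_right h5 (by positivity)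
      _ = _ := by ring

/-- Asymptotic RVQ gain for the MISO channel: for fixed `B̄ ≥ 0`,
`2^{B̄·N_t}·Beta(2^{B̄·N_t}, N_t/(N_t − 1)) → 2^{−B̄}` as `N_t → ∞`; equivalently, the mean
`E[ν] = 1 − 2^{B̄·N_t}·Beta(2^{B̄·N_t}, N_t/(N_t−1))` converges to `1 − 2^{−B̄}`. -/
theorem rvq_gain_asymptotics (Bbar : ℝ) (hB : 0 ≤ Bbar) :
    Filter.Tendsto
      (fun Nt : ℕ =>
        (2:ℝ) ^ (Bbar * (Nt : ℝ)) *
          Beta ((2:ℝ) ^ (Bbar * (Nt : ℝ))) ((Nt : ℝ) / ((Nt : ℝ) - 1)))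
      Filter.atTop (nhds ((2:ℝ) ^ (-Bbar))) ∧
    Filter.Tendsto
      (fun Nt : ℕ =>
        1 - (2:ℝ) ^ (Bbar * (Nt : ℝ)) *
          Beta ((2:ℝ) ^ (Bbar * (Nt : ℝ))) ((Nt : ℝ) / ((Nt : ℝ) - 1)))
      Filter.atTop (nhds (1 - (2:ℝ) ^ (-Bbar))) := by
  have key : Filter.Tendsto
      (fun Nt : ℕ =>
        (2:ℝ) ^ (Bbar * (Nt : ℝ)) *
          Beta ((2:ℝ) ^ (Bbar * (Nt : ℝ))) ((Nt : ℝ) / ((Nt : ℝ) - 1)))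
      Filter.atTop (nhds ((2:ℝ) ^ (-Bbar))) := by
    have hs : Filter.Tendsto (fun N : ℕ => 1 / ((N : ℝ) - 1)) Filter.atTop (nhds 0) := by
      have h1 : Filter.Tendsto (fun N : ℕ => (N : ℝ) - 1) Filter.atTop Filter.atTop :=
        Filter.tendsto_atTop_add_const_right _ (-1) tendsto_natCast_atTop_atTop
      simp only [one_div]
      exact h1.inv_tendsto_atTop
    have h1s : Filter.Tendsto (fun N : ℕ => 1 + 1 / ((N : ℝ) - 1)) Filter.atTop (nhds 1) := by
      simpa using hs.const_add 1
    have hG : Filter.Tendsto (fun N : ℕ => Real.Gamma (1 + 1 / ((N : ℝ) - 1)))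
        Filter.atTop (nhds 1) := by
      have hc : ContinuousAt Real.Gamma 1 :=
        (Real.differentiableAt_Gamma (s := 1) fun m => by
          have : (0:ℝ) ≤ m := m.cast_nonneg
          linarith).continuousAt
      have := hc.tendsto.comp h1s
      rwa [Real.Gamma_one] at this
    have h2 : Filter.Tendsto (fun N : ℕ => (2:ℝ) ^ (-(1 / ((N : ℝ) - 1))))
        Filter.atTop (nhds 1) := by
      simpa using Filter.Tendsto.rpow (tendsto_const_nhds (x := (2:ℝ))) hs.neg (Or.inl (by norm_num))
    have hX : Filter.Tendsto
        (fun N : ℕ => ((2:ℝ) ^ (Bbar * (N : ℝ))) ^ (-(1 / ((N : ℝ) - 1))))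
        Filter.atTop (nhds ((2:ℝ) ^ (-Bbar))) := by
      have h := Filter.Tendsto.rpow (tendsto_const_nhds (x := (2:ℝ))) (h1s.const_mul (-Bbar)) (Or.inl (by norm_num))
      rw [mul_one] at h
      refine h.congr' ?_
      filter_upwards [Filter.eventually_ge_atTop 3] with N hN
      have hN' : (3:ℝ) ≤ N := by exact_mod_cast hN
      have : (N:ℝ) - 1 ≠ 0 := by linarith
      rw [← Real.rpow_mul (by norm_num)]
      congr 1
      field_simp
      ring
    have hlo := hG.mul (h2.mul hX)
    have hhi := hG.mul (h1s.mul hX)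
    simp only [one_mul] at hlo hhi
    have hb : ∀ᶠ N : ℕ in Filter.atTop,
        Real.Gamma (1 + 1 / ((N : ℝ) - 1)) * ((2:ℝ) ^ (-(1 / ((N : ℝ) - 1))) *
            ((2:ℝ) ^ (Bbar * (N : ℝ))) ^ (-(1 / ((N : ℝ) - 1)))) ≤
          (2:ℝ) ^ (Bbar * (N : ℝ)) *
            Beta ((2:ℝ) ^ (Bbar * (N : ℝ))) ((N : ℝ) / ((N : ℝ) - 1)) ∧
        (2:ℝ) ^ (Bbar * (N : ℝ)) *
            Beta ((2:ℝ) ^ (Bbar * (N : ℝ))) ((N : ℝ) / ((N : ℝ) - 1)) ≤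
          Real.Gamma (1 + 1 / ((N : ℝ) - 1)) * ((1 + 1 / ((N : ℝ) - 1)) *
            ((2:ℝ) ^ (Bbar * (N : ℝ))) ^ (-(1 / ((N : ℝ) - 1)))) := by
      filter_upwards [Filter.eventually_ge_atTop 3] with N hN
      have hN' : (3:ℝ) ≤ N := by exact_mod_cast hN
      have hx : (1:ℝ) ≤ 2 ^ (Bbar * (N : ℝ)) :=
        Real.one_le_rpow (by norm_num) (by positivity)
      have hp : (0:ℝ) < (N:ℝ) - 1 := by linarith
      have h := Beta_bounds _ (1 / ((N : ℝ) - 1)) hx (by positivity)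
        (by rw [div_lt_one hp]; linarith)
      have e : 1 + 1 / ((N : ℝ) - 1) = (N : ℝ) / ((N : ℝ) - 1) := by field_simp; ring
      have e' : Beta ((2:ℝ) ^ (Bbar * (N : ℝ))) (1 + 1 / ((N : ℝ) - 1)) =
        Beta ((2:ℝ) ^ (Bbar * (N : ℝ))) ((N : ℝ) / ((N : ℝ) - 1)) := by rw [e]
      rw [e'] at h
      exact h
    exact tendsto_of_tendsto_of_tendsto_of_le_of_le' hlo hhi
      (hb.mono fun _ h => h.1) (hb.mono fun _ h => h.2)
  exact ⟨key, key.const_sub 1⟩
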